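/- Let G be an abelian group, X a compact Hausdorff topological space, and θ = ({X_t}_{t∈G}, {h_t}_{t∈G}) a topologically free topological partial action of G on X such that each X_t is clopen. Let α be the induced partial action of G on C(X) and R = C(X) ⋆_α G the partial skew group ring. Then every element of the center of R is supported in the identity coordinate; that is, if r ∈ R satisfies rs = sr for all s ∈ R, then P_g(r) = 0 for all g ≠ e_G, so the center of R is contained in C(X)δ_0. -/

import Mathlib

/-- A partial action `θ = ({X_t}, {h_t})` of a group `G` on a set `X`: subsets
`Xt t ⊆ X` and bijections `h t : Xt t⁻¹ → Xt t` (encoded as globally defined maps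
whose values only matter on `Xt t⁻¹`). -/
structure SetPartialAction (G : Type*) [Group G] (X : Type*) where
  Xt : G → Set X
  h : G → X → X
  h_mem : ∀ t, ∀ x ∈ Xt t⁻¹, h t x ∈ Xt t
  Xt_one : Xt 1 = Set.univ
  h_one : ∀ x, h 1 x = x
  h_left_inv : ∀ t, ∀ x ∈ Xt t⁻¹, h t⁻¹ (h t x) = x
  h_image : ∀ t s, h t '' (Xt t⁻¹ ∩ Xt s) = Xt t ∩ Xt (t * s)
  h_comp : ∀ t s, ∀ x ∈ Xt s⁻¹, x ∈ Xt (s⁻¹ * t⁻¹) → h t (h s x) = h (t * s) x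

/-- A topological partial action of `G` on a topological space `X` in which every
`Xt t` is clopen: the maps `h t : Xt t⁻¹ → Xt t` are homeomorphisms, i.e.
continuous on their domains (continuity of the inverse `h t⁻¹` on `Xt t` is an
instance of the same field at `t⁻¹`). -/
structure TopPartialAction (G : Type*) [Group G] (X : Type*) [TopologicalSpace X]
    extends SetPartialAction G X where
  clopen : ∀ t, IsClopen (Xt t)
  h_cont : ∀ t, ContinuousOn (h t) (Xt t⁻¹)

namespace SetPartialAction

variable {G : Type*} [Group G] {X : Type*}

/-- A subset `V ⊆ X` is `G`-invariant if `h t (V ∩ Xt t⁻¹) ⊆ V` for all `t`. -/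
def Invariant (θ : SetPartialAction G X) (V : Set X) : Prop :=
  ∀ t : G, θ.h t '' (V ∩ θ.Xt t⁻¹) ⊆ V

end SetPartialAction

namespace TopPartialAction

variable {G : Type*} [Group G] {X : Type*} [TopologicalSpace X]

/-- `θ` is minimal if `∅` and `X` are the only open `G`-invariant subsets of `X`. -/
def Minimal (θ : TopPartialAction G X) : Prop :=
  ∀ V : Set X, IsOpen V → θ.toSetPartialAction.Invariant V → V = ∅ ∨ V = Set.univ

/-- `θ` is topologically free if for every `t ≠ 1` the set
`F_t = {x ∈ Xt t⁻¹ : h t x = x}` has empty interior. -/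
def TopologicallyFree (θ : TopPartialAction G X) : Prop :=
  ∀ t : G, t ≠ 1 → interior {x ∈ θ.Xt t⁻¹ | θ.h t x = x} = ∅

/-- The ideal `D t = C(X_t) = {f ∈ C(X) : f = 0 off X_t}` of `C(X) = C(X, ℂ)`,
as an additive subgroup. -/
noncomputable def DC (θ : TopPartialAction G X) (t : G) : AddSubgroup C(X, ℂ) where
  carrier := {f : C(X, ℂ) | ∀ x ∉ θ.Xt t, f x = 0}
  zero_mem' := by intro x _; simp
  add_mem' := by intro f g hf hg x hx; simp [hf x hx, hg x hx]
  neg_mem' := by intro f hf x hx; simp [hf x hx]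

open Classical in
/-- The induced map `α t : C(X) → C(X)`, `α t f = f ∘ h t⁻¹` on `Xt t`, extended by
zero off `Xt t` (continuous since `Xt t` is clopen). -/
noncomputable def amapC (θ : TopPartialAction G X) (t : G) (f : C(X, ℂ)) : C(X, ℂ) :=
  ⟨fun x => if x ∈ θ.Xt t then f (θ.h t⁻¹ x) else 0, by
    rw [continuous_iff_continuousAt]
    intro x
    by_cases hx : x ∈ θ.Xt t
    · have hopen : IsOpen (θ.Xt t) := (θ.clopen t).isOpen
      have hc : ContinuousOn (fun y => f (θ.h t⁻¹ y)) (θ.Xt t) := by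
        apply f.continuous.comp_continuousOn
        have h1 := θ.h_cont t⁻¹
        rwa [inv_inv] at h1
      have hca := hc.continuousAt (hopen.mem_nhds hx)
      apply hca.congr
      filter_upwards [hopen.mem_nhds hx] with y hy
      simp [hy]
    · have hopen : IsOpen (θ.Xt t)ᶜ := (θ.clopen t).compl.isOpen
      have hca : ContinuousAt (fun _ : X => (0 : ℂ)) x := continuousAt_const
      apply hca.congr
      filter_upwards [hopen.mem_nhds hx] with y hy
      simp only [Set.mem_compl_iff] at hy
      simp [hy]⟩

/-- An ideal `I ⊆ C(X)` is `G`-invariant: `α t (I ∩ D t⁻¹) ⊆ I ∩ D t`. -/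
def GInvariantC (θ : TopPartialAction G X) (I : Ideal C(X, ℂ)) : Prop :=
  ∀ t : G, ∀ f ∈ I, f ∈ θ.DC t⁻¹ → θ.amapC t f ∈ I ∧ θ.amapC t f ∈ θ.DC t

/-- The underlying additive group of the partial skew group ring `C(X) ⋆_α G`. -/
abbrev SkewC (θ : TopPartialAction G X) : Type _ := Π₀ t : G, ↥(θ.DC t)

/-- The element `f δ_t` for `f ∈ D t`. -/
noncomputable def deltaC [DecidableEq G] (θ : TopPartialAction G X) (t : G)
    (f : C(X, ℂ)) (hf : f ∈ θ.DC t) : θ.SkewC :=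
  DFinsupp.single t ⟨f, hf⟩

/-- The element `f δ_0` for arbitrary `f ∈ C(X) = D 1`. -/
noncomputable def deltaC0 [DecidableEq G] (θ : TopPartialAction G X) (f : C(X, ℂ)) :
    θ.SkewC :=
  θ.deltaC 1 f (by intro x hx; rw [θ.Xt_one] at hx; exact absurd (Set.mem_univ x) hx)

end TopPartialAction

/-- The multiplication of `C(X) ⋆_α G`, *assumed* to exist, to be biadditive,
associative and to satisfy `(f δ_t)(g δ_s) = α_t(α_{t⁻¹}(f) g) δ_{ts}`. -/
structure CSkewMul {G : Type*} [Group G] [DecidableEq G] {X : Type*}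
    [TopologicalSpace X] (θ : TopPartialAction G X) where
  mul : θ.SkewC → θ.SkewC → θ.SkewC
  left_distrib : ∀ x y z, mul x (y + z) = mul x y + mul x z
  right_distrib : ∀ x y z, mul (x + y) z = mul x z + mul y z
  mul_single : ∀ (t s : G) (a : C(X, ℂ)) (ha : a ∈ θ.DC t)
      (b : C(X, ℂ)) (hb : b ∈ θ.DC s) (g : G),
    ((mul (θ.deltaC t a ha) (θ.deltaC s b hb)) g : C(X, ℂ)) =
      if g = t * s then θ.amapC t (θ.amapC t⁻¹ a * b) else 0
  assoc : ∀ x y z, mul (mul x y) z = mul x (mul y z)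

variable {G : Type*} [Group G] [DecidableEq G] {X : Type*} [TopologicalSpace X]
  {θ : TopPartialAction G X}

/-- `J` is a two-sided ideal of the partial skew group ring `C(X) ⋆_α G`. -/
def IsSkewIdealC (S : CSkewMul θ) (J : Set θ.SkewC) : Prop :=
  (0 : θ.SkewC) ∈ J ∧ (∀ x ∈ J, ∀ y ∈ J, x + y ∈ J) ∧ (∀ x ∈ J, -x ∈ J) ∧
    (∀ x ∈ J, ∀ y : θ.SkewC, S.mul x y ∈ J ∧ S.mul y x ∈ J)

/-- The center of the partial skew group ring `C(X) ⋆_α G`. -/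
def centerC (S : CSkewMul θ) : Set θ.SkewC :=
  {r | ∀ s : θ.SkewC, S.mul r s = S.mul s r}

/-!
Commuting with `f δ_0` says, in the coordinate `g`, that `r g · (f ∘ h g⁻¹) = f · r g` on `Xt g`.
Wherever `r g` is nonzero this forces `f (h g⁻¹ x) = f x` for every continuous `f`, so `x` is fixed
by `h g⁻¹`. Hence the open set `{r g ≠ 0}` lies in the fixed-point set of `h g⁻¹`, which has empty
interior when `g ≠ 1`.
-/

namespace SetPartialAction

omit [DecidableEq G] [TopologicalSpace X]

variable {θ : SetPartialAction G X} {t : G} {x : X}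

lemma h_inv_mem (hx : x ∈ θ.Xt t) : θ.h t⁻¹ x ∈ θ.Xt t⁻¹ :=
  θ.h_mem t⁻¹ x (by rwa [inv_inv])

lemma h_h_inv (hx : x ∈ θ.Xt t) : θ.h t (θ.h t⁻¹ x) = x := by
  simpa only [inv_inv] using θ.h_left_inv t⁻¹ x (by rwa [inv_inv])

end SetPartialAction

namespace TopPartialAction

section CoefficientAlgebra

omit [DecidableEq G]

variable {t : G} {x : X}

lemma mem_DC_one (f : C(X, ℂ)) : f ∈ θ.DC 1 := fun x hx =>
  absurd (θ.Xt_one ▸ Set.mem_univ x) hx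

lemma mem_Xt_of_apply_ne_zero {a : C(X, ℂ)} (ha : a ∈ θ.DC t) (hx : a x ≠ 0) : x ∈ θ.Xt t :=
  not_imp_comm.1 (ha x) hx

lemma amapC_apply_of_mem (f : C(X, ℂ)) (hx : x ∈ θ.Xt t) : θ.amapC t f x = f (θ.h t⁻¹ x) :=
  if_pos hx

lemma amapC_apply_of_notMem (f : C(X, ℂ)) (hx : x ∉ θ.Xt t) : θ.amapC t f x = 0 :=
  if_neg hx

lemma amapC_one (f : C(X, ℂ)) : θ.amapC 1 f = f := by
  ext x
  rw [amapC_apply_of_mem f (θ.Xt_one ▸ Set.mem_univ x), inv_one, θ.h_one]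

lemma amapC_amapC_inv_mul (t : G) (a b : C(X, ℂ)) :
    θ.amapC t (θ.amapC t⁻¹ a * b) = a * θ.amapC t b := by
  ext x
  by_cases hx : x ∈ θ.Xt t
  · simp only [ContinuousMap.mul_apply, amapC_apply_of_mem _ hx,
      amapC_apply_of_mem _ (θ.h_inv_mem hx), inv_inv, θ.h_h_inv hx]
  · simp only [ContinuousMap.mul_apply, amapC_apply_of_notMem _ hx, mul_zero]

lemma h_inv_eq_self_of_mul_amapC_eq (hX : Set.SeparatesPoints {f : X → ℝ | Continuous f})
    {a : C(X, ℂ)} (ha : ∀ f : C(X, ℂ), a * θ.amapC t f = f * a) (hxt : x ∈ θ.Xt t)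
    (hx : a x ≠ 0) : θ.h t⁻¹ x = x := by
  by_contra hne
  obtain ⟨f, hf, hfx⟩ := hX hne
  let F : C(X, ℂ) := ⟨fun y => (f y : ℂ), Complex.continuous_ofReal.comp hf⟩
  have hF : a x * F (θ.h t⁻¹ x) = a x * F x := by
    rw [← amapC_apply_of_mem F hxt, mul_comm (a x) (F x)]
    exact DFunLike.congr_fun (ha F) x
  exact hfx (Complex.ofReal_injective (mul_left_cancel₀ hx hF))

lemma TopologicallyFree.eq_zero_of_mul_amapC_eq (hfree : θ.TopologicallyFree)
    (hX : Set.SeparatesPoints {f : X → ℝ | Continuous f}) (ht : t ≠ 1) {a : C(X, ℂ)}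
    (hat : a ∈ θ.DC t) (ha : ∀ f : C(X, ℂ), a * θ.amapC t f = f * a) : a = 0 := by
  have hopen : IsOpen {x | a x ≠ 0} := isOpen_ne_fun a.continuous continuous_const
  have hfixed : {x | a x ≠ 0} ⊆ {x ∈ θ.Xt t⁻¹⁻¹ | θ.h t⁻¹ x = x} := fun x hx =>
    have hxt : x ∈ θ.Xt t := mem_Xt_of_apply_ne_zero hat hx
    ⟨by rwa [inv_inv], h_inv_eq_self_of_mul_amapC_eq hX ha hxt hx⟩
  have hempty : {x | a x ≠ 0} ⊆ ∅ :=
    hfree t⁻¹ (inv_ne_one.2 ht) ▸ interior_maximal hfixed hopen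
  ext x
  exact not_not.1 fun hx => hempty hx

end CoefficientAlgebra

end TopPartialAction

namespace CSkewMul

open TopPartialAction

variable (S : CSkewMul θ)

lemma zero_mul (r : θ.SkewC) : S.mul 0 r = 0 :=
  (AddMonoidHom.mk' (S.mul · r) fun a b => S.right_distrib a b r).map_zero

lemma mul_zero (r : θ.SkewC) : S.mul r 0 = 0 :=
  (AddMonoidHom.mk' (S.mul r) (S.left_distrib r)).map_zero

lemma single_mul_deltaC0_apply (t : G) (a : θ.DC t) (f : C(X, ℂ)) (g : G) :
    (S.mul (DFinsupp.single t a) (θ.deltaC0 f) g : C(X, ℂ)) =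
      (DFinsupp.single t a : θ.SkewC) g * θ.amapC g f := by
  refine (S.mul_single t 1 a a.2 f (mem_DC_one f) g).trans ?_
  obtain rfl | hgt := eq_or_ne g t
  · rw [if_pos (mul_one g).symm, amapC_amapC_inv_mul, DFinsupp.single_eq_same]
  · rw [if_neg (by rwa [mul_one]), DFinsupp.single_eq_of_ne hgt, ZeroMemClass.coe_zero,
      MulZeroClass.zero_mul]

lemma deltaC0_mul_single_apply (f : C(X, ℂ)) (t : G) (a : θ.DC t) (g : G) :
    (S.mul (θ.deltaC0 f) (DFinsupp.single t a) g : C(X, ℂ)) =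
      f * (DFinsupp.single t a : θ.SkewC) g := by
  refine (S.mul_single 1 t f (mem_DC_one f) a a.2 g).trans ?_
  obtain rfl | hgt := eq_or_ne g t
  · rw [if_pos (one_mul g).symm, amapC_amapC_inv_mul, amapC_one, DFinsupp.single_eq_same]
  · rw [if_neg (by rwa [one_mul]), DFinsupp.single_eq_of_ne hgt, ZeroMemClass.coe_zero,
      MulZeroClass.mul_zero]

lemma mul_deltaC0_apply (r : θ.SkewC) (f : C(X, ℂ)) (g : G) :
    (S.mul r (θ.deltaC0 f) g : C(X, ℂ)) = r g * θ.amapC g f := by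
  induction r using DFinsupp.induction with
  | h0 => simp [S.zero_mul]
  | ha t a r _ _ ih =>
    simp only [S.right_distrib, DFinsupp.add_apply, AddSubgroup.coe_add, ih, add_mul,
      S.single_mul_deltaC0_apply]

lemma deltaC0_mul_apply (f : C(X, ℂ)) (r : θ.SkewC) (g : G) :
    (S.mul (θ.deltaC0 f) r g : C(X, ℂ)) = f * r g := by
  induction r using DFinsupp.induction with
  | h0 => simp [S.mul_zero]
  | ha t a r _ _ ih =>
    simp only [S.left_distrib, DFinsupp.add_apply, AddSubgroup.coe_add, ih, mul_add,
      S.deltaC0_mul_single_apply]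

end CSkewMul

theorem center_supported_at_identity_of_topFree_general
    (hX : Set.SeparatesPoints {f : X → ℝ | Continuous f}) (hfree : θ.TopologicallyFree)
    (S : CSkewMul θ) {r : θ.SkewC}
    (hr : ∀ f : C(X, ℂ), S.mul r (θ.deltaC0 f) = S.mul (θ.deltaC0 f) r) {g : G} (hg : g ≠ 1) :
    (r g : C(X, ℂ)) = 0 := by
  refine hfree.eq_zero_of_mul_amapC_eq hX hg (r g).2 fun f => ?_
  rw [← S.mul_deltaC0_apply, hr, S.deltaC0_mul_apply]

theorem center_supported_at_identity_of_topFree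
    {G' : Type*} [CommGroup G'] [DecidableEq G'] {Y : Type*} [TopologicalSpace Y]
    [CompactSpace Y] [T2Space Y]
    (θ' : TopPartialAction G' Y) (hfree : θ'.TopologicallyFree) (S : CSkewMul θ') :
    ∀ r ∈ centerC S, ∀ g : G', g ≠ 1 → ((r g : C(Y, ℂ)) = 0) :=
  fun _ hr _ => center_supported_at_identity_of_topFree_general
    separatesPoints_continuous_of_t35Space hfree S fun f => hr (θ'.deltaC0 f)
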